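/- arXiv:1605.07884 — 2 statements merged into one kernel-verified Lean document; each statement's English description precedes it below -/
import Mathlib

section
/- Let X be an integrable random closed set in ℝ^d (i.e. X admits an integrable selection) and H ⊆ F a sub-σ-algebra. Let E(X|H) be the H-measurable random closed set whose integrable H-measurable selections equal the L¹-closure of {E(ξ|H) : ξ ∈ L¹(X,F)}. Then the set of all (not necessarily integrable) H-measurable selections of E(X|H) coincides with the closure in probability of {E(ξ|H) : ξ ∈ L¹(X,F)}. -/
open MeasureTheory Filter Set Topology
open scoped Pointwise ENNReal

noncomputable section

/-- Shorthand for the Euclidean space `ℝ^d`. -/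
abbrev Ed (d : ℕ) := EuclideanSpace ℝ (Fin d)

/-- A set-valued map `Γ : Ω → Set (ℝ^d)` is a random set w.r.t. the σ-algebra `m`
if its graph belongs to the product σ-algebra `m ⊗ B(ℝ^d)`. -/
def GraphMeasurable {Ω : Type*} {d : ℕ} (m : MeasurableSpace Ω)
    (Γ : Ω → Set (Ed d)) : Prop :=
  MeasurableSet[m.prod (inferInstance : MeasurableSpace (Ed d))]
    {p : Ω × Ed d | p.2 ∈ Γ p.1}

/-- The family `{E(ξ|H) : ξ ∈ L¹(X,F)}` of conditional expectations of the integrable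
selections of `X`. -/
def condexpSet {Ω : Type*} {d : ℕ} {F : MeasurableSpace Ω} (μ : Measure Ω)
    (H : MeasurableSpace Ω) (X : Ω → Set (Ed d)) : Set (Ω → Ed d) :=
  {g | ∃ ξ : Ω → Ed d, Measurable[F] ξ ∧ Integrable ξ μ ∧
    (∀ᵐ ω ∂μ, ξ ω ∈ X ω) ∧ g = μ[ξ|H]}

/-- The closure of a family of random vectors in `L¹`. -/
def cl1 {Ω : Type*} {d : ℕ} {F : MeasurableSpace Ω} (μ : Measure Ω)
    (S : Set (Ω → Ed d)) : Set (Ω → Ed d) :=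
  {g | Integrable g μ ∧ ∃ f : ℕ → Ω → Ed d, (∀ n, f n ∈ S) ∧
    Tendsto (fun n => eLpNorm (f n - g) 1 μ) atTop (𝓝 0)}

/-- The closure of a family of random vectors with respect to convergence in probability. -/
def clInProb {Ω : Type*} {d : ℕ} {F : MeasurableSpace Ω} (μ : Measure Ω)
    (S : Set (Ω → Ed d)) : Set (Ω → Ed d) :=
  {g | ∃ f : ℕ → Ω → Ed d, (∀ n, f n ∈ S) ∧ TendstoInMeasure μ f atTop g}

/-!
Replacing a selection `η` of a random closed set by a fixed `p`-integrable selection `ζ` on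
`{‖η‖ > n}` gives `p`-integrable selections converging to `η` in measure. Those are limits in `Lᵖ`,
hence in measure, of the family that generates the random set, and the closure in measure is
idempotent. Conversely, a limit in measure is the a.e. limit of a subsequence, so it stays in the
closed values. It is measurable for the sub-σ-algebra, and not merely a.e. equal to such a function,
because every a.e. modification of a member of the family is measurable for it.
-/

section Closures

variable {Ω E : Type*} {mΩ : MeasurableSpace Ω} {μ : Measure Ω}

/-- The closure of a family of `E`-valued functions with respect to convergence in measure. It is
sequential, and it consists of functions rather than of classes modulo a.e. equality; `clInProb`
is the case `E = ℝ^d`. -/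
def inMeasureClosure [EDist E] (μ : Measure Ω) (S : Set (Ω → E)) : Set (Ω → E) :=
  {g | ∃ f : ℕ → Ω → E, (∀ n, f n ∈ S) ∧ TendstoInMeasure μ f atTop g}

/-- The sequential closure in `Lᵖ` of a family of `E`-valued functions, again consisting of
functions rather than of classes modulo a.e. equality. It extends `cl1` to other
exponents and spaces. -/
def lpClosure [NormedAddCommGroup E] (p : ℝ≥0∞) (μ : Measure Ω) (S : Set (Ω → E)) :
    Set (Ω → E) :=
  {g | MemLp g p μ ∧ ∃ f : ℕ → Ω → E, (∀ n, f n ∈ S) ∧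
    Tendsto (fun n => eLpNorm (f n - g) p μ) atTop (𝓝 0)}

theorem cl1_eq_lpClosure_one {d : ℕ} (S : Set (Ω → Ed d)) : cl1 μ S = lpClosure 1 μ S := by
  simp only [cl1, lpClosure, memLp_one_iff_integrable]

theorem mem_inMeasureClosure_of_ae_eq [EDist E] {S : Set (Ω → E)} {g g' : Ω → E}
    (hgg' : g =ᵐ[μ] g') (hg : g ∈ inMeasureClosure μ S) : g' ∈ inMeasureClosure μ S :=
  let ⟨f, hfS, hfg⟩ := hg
  ⟨f, hfS, hfg.congr_right hgg'⟩

theorem mem_inMeasureClosure_iff_forall_pos [EDist E] {S : Set (Ω → E)} {g : Ω → E} :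
    g ∈ inMeasureClosure μ S ↔
      ∀ ε : ℝ≥0∞, 0 < ε → ∃ f ∈ S, μ {ω | ε ≤ edist (f ω) (g ω)} ≤ ε := by
  constructor
  · rintro ⟨f, hfS, hfg⟩ ε hε
    obtain ⟨n, hn⟩ := ((hfg ε hε).eventually_le_const hε).exists
    exact ⟨f n, hfS n, hn⟩
  · intro h
    choose f hfS hf using fun n : ℕ => h (n : ℝ≥0∞)⁻¹ (by simp)
    refine ⟨f, hfS, fun ε hε => ?_⟩
    refine tendsto_of_tendsto_of_tendsto_of_le_of_le' tendsto_const_nhds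
      ENNReal.tendsto_inv_nat_nhds_zero (Eventually.of_forall fun _ => zero_le) ?_
    filter_upwards [ENNReal.tendsto_inv_nat_nhds_zero.eventually_le_const hε] with n hn
    exact (measure_mono fun ω hω => hn.trans hω).trans (hf n)

theorem inMeasureClosure_subset_of_subset [PseudoEMetricSpace E] {S T : Set (Ω → E)}
    (hTS : T ⊆ inMeasureClosure μ S) : inMeasureClosure μ T ⊆ inMeasureClosure μ S := by
  intro g hg
  rw [mem_inMeasureClosure_iff_forall_pos] at hg ⊢
  intro ε hε
  obtain ⟨t, htT, htg⟩ := hg (ε / 2) (ENNReal.half_pos hε.ne')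
  obtain ⟨f, hfS, hft⟩ :=
    mem_inMeasureClosure_iff_forall_pos.1 (hTS htT) (ε / 2) (ENNReal.half_pos hε.ne')
  have dist_split : {ω | ε ≤ edist (f ω) (g ω)} ⊆
      {ω | ε / 2 ≤ edist (f ω) (t ω)} ∪ {ω | ε / 2 ≤ edist (t ω) (g ω)} := by
    intro ω
    simp only [mem_union, mem_ofPred_eq]
    contrapose!
    rintro ⟨hft, htg⟩
    calc edist (f ω) (g ω) ≤ edist (f ω) (t ω) + edist (t ω) (g ω) := edist_triangle _ _ _
      _ < ε / 2 + ε / 2 := ENNReal.add_lt_add hft htg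
      _ = ε := ENNReal.add_halves ε
  refine ⟨f, hfS, ?_⟩
  calc μ {ω | ε ≤ edist (f ω) (g ω)}
      ≤ μ {ω | ε / 2 ≤ edist (f ω) (t ω)} + μ {ω | ε / 2 ≤ edist (t ω) (g ω)} :=
        (measure_mono dist_split).trans (measure_union_le _ _)
    _ ≤ ε / 2 + ε / 2 := add_le_add hft htg
    _ = ε := ENNReal.add_halves ε

variable [NormedAddCommGroup E] {p : ℝ≥0∞} {S : Set (Ω → E)}

theorem subset_lpClosure (hS : ∀ f ∈ S, MemLp f p μ) : S ⊆ lpClosure p μ S :=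
  fun f hf => ⟨hS f hf, fun _ => f, fun _ => hf, by simp⟩

theorem lpClosure_subset_inMeasureClosure (hp : p ≠ 0)
    (hS : ∀ f ∈ S, AEStronglyMeasurable f μ) : lpClosure p μ S ⊆ inMeasureClosure μ S :=
  fun _ ⟨hg, f, hfS, hfg⟩ => ⟨f, hfS,
    tendstoInMeasure_of_tendsto_eLpNorm hp (fun n => hS _ (hfS n)) hg.aestronglyMeasurable hfg⟩

end Closures

section LimitsInMeasure

variable {Ω E : Type*} {mΩ : MeasurableSpace Ω} {μ : Measure Ω} [PseudoEMetricSpace E]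
  {ι : Type*} {u : Filter ι} [u.NeBot] [u.IsCountablyGenerated] {f : ι → Ω → E} {g : Ω → E}

theorem ae_mem_of_tendstoInMeasure {Y : Ω → Set E} (hY : ∀ᵐ ω ∂μ, IsClosed (Y ω))
    (hf : ∀ i, ∀ᵐ ω ∂μ, f i ω ∈ Y ω) (hfg : TendstoInMeasure μ f u g) :
    ∀ᵐ ω ∂μ, g ω ∈ Y ω := by
  obtain ⟨ns, -, hlim⟩ := hfg.exists_seq_tendsto_ae'
  filter_upwards [hY, hlim, ae_all_iff.2 fun n => hf (ns n)] with ω hωY hωlim hωf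
  exact hωY.mem_of_tendsto hωlim (Eventually.of_forall hωf)

theorem measurable_of_forall_ae_eq_of_tendstoInMeasure [MeasurableSpace E] [BorelSpace E]
    {m : MeasurableSpace Ω} (hf : ∀ i, ∀ f' : Ω → E, f' =ᵐ[μ] f i → Measurable[m] f')
    (hfg : TendstoInMeasure μ f u g) : Measurable[m] g := by
  classical
  obtain ⟨ns, -, hlim⟩ := hfg.exists_seq_tendsto_ae'
  -- Replacing `f (ns n)` by `g` off the convergence set makes the convergence hold everywhere.
  set C : Set Ω := {ω | Tendsto (fun n => f (ns n) ω) atTop (𝓝 (g ω))}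
  have piecewise_measurable (n : ℕ) : Measurable[m] (C.piecewise (f (ns n)) g) := by
    refine hf (ns n) _ ?_
    filter_upwards [hlim] with ω hω
    exact C.piecewise_eq_of_mem _ _ hω
  refine @measurable_of_tendsto_metrizable Ω E m _ _ _ _ _ g piecewise_measurable
    (tendsto_pi_nhds.2 fun ω => ?_)
  by_cases hω : ω ∈ C
  · simp only [C.piecewise_eq_of_mem _ _ hω]
    exact hω
  · simpa only [C.piecewise_eq_of_notMem _ _ hω] using tendsto_const_nhds

end LimitsInMeasure

section Selections

variable {Ω E : Type*} {mΩ : MeasurableSpace Ω} {μ : Measure Ω}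

open Classical in
theorem tendsto_piecewise_norm_le [Norm E] [TopologicalSpace E] (η ζ : Ω → E) (ω : Ω) :
    Tendsto (fun n : ℕ => {ω | ‖η ω‖ ≤ n}.piecewise η ζ ω) atTop (𝓝 (η ω)) := by
  refine tendsto_const_nhds.congr' ?_
  filter_upwards [tendsto_natCast_atTop_atTop.eventually_ge_atTop ‖η ω‖] with n hn
  exact (Set.piecewise_eq_of_mem {ω | ‖η ω‖ ≤ n} η ζ hn).symm

variable [NormedAddCommGroup E] {η ζ : Ω → E}

open Classical in
theorem memLp_piecewise_norm_le [IsFiniteMeasure μ] {p : ℝ≥0∞} {C : ℝ}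
    (hC : MeasurableSet {ω | ‖η ω‖ ≤ C}) (hη : AEStronglyMeasurable η μ) (hζ : MemLp ζ p μ) :
    MemLp ({ω | ‖η ω‖ ≤ C}.piecewise η ζ) p μ :=
  MemLp.piecewise hC
    (MemLp.of_bound hη.restrict C (ae_restrict_of_forall_mem hC fun _ hω => hω)) (hζ.restrict _)

theorem mem_inMeasureClosure_memLp_selections [MeasurableSpace E] [BorelSpace E]
    [SecondCountableTopology E] [IsFiniteMeasure μ] {p : ℝ≥0∞} {m : MeasurableSpace Ω}
    (hm : m ≤ mΩ) {Y : Ω → Set E}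
    (hη : Measurable[m] η) (hηY : ∀ᵐ ω ∂μ, η ω ∈ Y ω)
    (hζ : Measurable[m] ζ) (hζp : MemLp ζ p μ) (hζY : ∀ᵐ ω ∂μ, ζ ω ∈ Y ω) :
    η ∈ inMeasureClosure μ
      {ξ : Ω → E | Measurable[m] ξ ∧ MemLp ξ p μ ∧ ∀ᵐ ω ∂μ, ξ ω ∈ Y ω} := by
  classical
  have level_measurable (n : ℕ) : MeasurableSet[m] {ω | ‖η ω‖ ≤ n} :=
    measurableSet_le hη.norm measurable_const
  have truncation_memLp (n : ℕ) : MemLp ({ω | ‖η ω‖ ≤ n}.piecewise η ζ) p μ :=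
    memLp_piecewise_norm_le (hm _ (level_measurable n))
      (hη.mono hm le_rfl).aestronglyMeasurable hζp
  refine ⟨fun n : ℕ => {ω | ‖η ω‖ ≤ n}.piecewise η ζ,
    fun n => ⟨hη.piecewise (level_measurable n) hζ, truncation_memLp n, ?_⟩,
    tendstoInMeasure_of_tendsto_ae (fun n => (truncation_memLp n).aestronglyMeasurable)
      (ae_of_all _ (tendsto_piecewise_norm_le η ζ))⟩
  filter_upwards [hηY, hζY] with ω hω hω'
  simp only [Set.piecewise]
  split_ifs <;> assumption

end Selections

section CondexpSet

variable {Ω : Type*} {d : ℕ} {F : MeasurableSpace Ω} {μ : Measure Ω} {H : MeasurableSpace Ω}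
  {X : Ω → Set (Ed d)}

theorem condexpSet_nonempty
    (hX : ∃ ξ : Ω → Ed d, Measurable[F] ξ ∧ Integrable ξ μ ∧ ∀ᵐ ω ∂μ, ξ ω ∈ X ω) :
    (condexpSet μ H X).Nonempty :=
  let ⟨ξ, hξ, hξi, hξX⟩ := hX
  ⟨μ[ξ|H], ξ, hξ, hξi, hξX, rfl⟩

theorem memLp_one_of_mem_condexpSet {g : Ω → Ed d} (hg : g ∈ condexpSet μ H X) :
    MemLp g 1 μ := by
  obtain ⟨ξ, -, -, -, rfl⟩ := hg
  exact memLp_one_iff_integrable.2 integrable_condExp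

end CondexpSet

theorem stmt_14_general {Ω E : Type*} {F : MeasurableSpace Ω} [NormedAddCommGroup E]
    [MeasurableSpace E] [BorelSpace E] [SecondCountableTopology E]
    {μ : Measure Ω} [IsFiniteMeasure μ] {p : ℝ≥0∞} (hp : p ≠ 0)
    {H : MeasurableSpace Ω} (hHF : H ≤ F)
    {S : Set (Ω → E)} (hS : S.Nonempty) (hSp : ∀ f ∈ S, MemLp f p μ)
    {Y : Ω → Set E} (hYcl : ∀ᵐ ω ∂μ, IsClosed (Y ω))
    (hY : ∀ η : Ω → E,
      (Measurable[H] η ∧ MemLp η p μ ∧ ∀ᵐ ω ∂μ, η ω ∈ Y ω) ↔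
        ∃ g ∈ lpClosure p μ S, η =ᵐ[μ] g) :
    ∀ η : Ω → E,
      (Measurable[H] η ∧ ∀ᵐ ω ∂μ, η ω ∈ Y ω) ↔
        ∃ g ∈ inMeasureClosure μ S, η =ᵐ[μ] g := by
  have selection_of_ae_eq {f f' : Ω → E} (hf : f ∈ S) (hff' : f' =ᵐ[μ] f) :
      Measurable[H] f' ∧ MemLp f' p μ ∧ ∀ᵐ ω ∂μ, f' ω ∈ Y ω :=
    (hY f').2 ⟨f, subset_lpClosure hSp hf, hff'⟩
  refine fun η => ⟨fun ⟨hη, hηY⟩ => ?_, fun ⟨g, ⟨f, hfS, hfg⟩, hηg⟩ => ?_⟩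
  · obtain ⟨ζ, hζS⟩ := hS
    obtain ⟨hζ, hζp, hζY⟩ := selection_of_ae_eq hζS .rfl
    have memLp_selections_subset :
        {ξ : Ω → E | Measurable[H] ξ ∧ MemLp ξ p μ ∧ ∀ᵐ ω ∂μ, ξ ω ∈ Y ω} ⊆
          inMeasureClosure μ S := fun ξ hξ =>
      let ⟨_, hg, hξg⟩ := (hY ξ).1 hξ
      mem_inMeasureClosure_of_ae_eq hξg.symm
        (lpClosure_subset_inMeasureClosure hp (fun f hf => (hSp f hf).aestronglyMeasurable) hg)
    exact ⟨η, inMeasureClosure_subset_of_subset memLp_selections_subset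
      (mem_inMeasureClosure_memLp_selections hHF hη hηY hζ hζp hζY), .rfl⟩
  · have hfη : TendstoInMeasure μ f atTop η := hfg.congr_right hηg.symm
    exact ⟨measurable_of_forall_ae_eq_of_tendstoInMeasure
        (fun n _ h => (selection_of_ae_eq (hfS n) h).1) hfη,
      ae_mem_of_tendstoInMeasure hYcl (fun n => (selection_of_ae_eq (hfS n) .rfl).2.2) hfη⟩

/-- Lemma: the (not necessarily integrable) `H`-measurable selections of the conditional
expectation `E(X|H)` of an integrable random closed set `X` coincide, up to a.s. equality,
with the closure in probability of `{E(ξ|H) : ξ ∈ L¹(X,F)}`.  Here `Y = E(X|H)` is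
characterised by the property that its integrable `H`-measurable selections form the
`L¹`-closure of `{E(ξ|H) : ξ ∈ L¹(X,F)}`. -/
theorem stmt_14 {Ω : Type*} {d : ℕ} [F : MeasurableSpace Ω]
    (μ : Measure Ω) [IsProbabilityMeasure μ] [μ.IsComplete]
    (H : MeasurableSpace Ω) (hHF : H ≤ F)
    (X : Ω → Set (Ed d)) (hX : GraphMeasurable F X)
    (hXcl : ∀ᵐ ω ∂μ, IsClosed (X ω))
    (hXint : ∃ ξ : Ω → Ed d, Measurable[F] ξ ∧ Integrable ξ μ ∧ ∀ᵐ ω ∂μ, ξ ω ∈ X ω)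
    (Y : Ω → Set (Ed d)) (hYgr : GraphMeasurable H Y)
    (hYcl : ∀ᵐ ω ∂μ, IsClosed (Y ω))
    (hY : ∀ η : Ω → Ed d,
      (Measurable[H] η ∧ Integrable η μ ∧ ∀ᵐ ω ∂μ, η ω ∈ Y ω) ↔
        ∃ g ∈ cl1 μ (condexpSet μ H X), η =ᵐ[μ] g) :
    ∀ η : Ω → Ed d,
      (Measurable[H] η ∧ ∀ᵐ ω ∂μ, η ω ∈ Y ω) ↔
        ∃ g ∈ clInProb μ (condexpSet μ H X), η =ᵐ[μ] g := by
  simp only [cl1_eq_lpClosure_one, ← memLp_one_iff_integrable] at hY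
  exact stmt_14_general one_ne_zero hHF (condexpSet_nonempty hXint)
    (fun _ => memLp_one_of_mem_condexpSet) hYcl hY
end
end

section
/- Let X be a random closed set in ℝ^d with 0 ∈ X(ω) for almost all ω, let H ⊆ F be a sub-σ-algebra, and let Xⁿ(ω) = X(ω) ∩ {x : ‖x‖ ≤ n} for n ≥ 1. Then the closure in probability of {E(ξ|H) : ξ ∈ L¹(X,F)} equals the closure in probability of ∪_{n≥1} {E(ξ|H) : ξ ∈ L¹(Xⁿ,F)}. Equivalently, E(X|H) = cl ∪_{n≥1} E(Xⁿ|H) almost surely. -/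
open MeasureTheory Filter Set Topology
open scoped Pointwise ENNReal

noncomputable section

/-!
Closure in measure is insensitive to replacing a set by one that is `L^p`-dense in it: a sequence
converging in measure may be perturbed by `L^p`-small amounts. Since `0` belongs to `X`, truncating
an integrable selection of `X` to zero where its norm exceeds `r` gives a selection of
`X ∩ closedBall 0 r`. The truncations converge to the selection in `L¹` as `r → ∞`, and so do their
conditional expectations, because conditional expectation is an `L¹`-contraction.
-/

section ClosureInMeasure

variable {α ι E : Type*} {m : MeasurableSpace α} {μ : Measure α} {p : ℝ≥0∞}

theorem tendstoInMeasure_add [SeminormedAddCommGroup E] {l : Filter ι} {f f' : ι → α → E}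
    {g g' : α → E} (hf : TendstoInMeasure μ f l g) (hf' : TendstoInMeasure μ f' l g') :
    TendstoInMeasure μ (fun i => f i + f' i) l (g + g') := by
  intro ε hε
  have hε2 : 0 < ε / 2 := ENNReal.half_pos hε.ne'
  have hsum := (hf _ hε2).add (hf' _ hε2)
  rw [add_zero] at hsum
  refine tendsto_of_tendsto_of_tendsto_of_le_of_le tendsto_const_nhds hsum (fun _ => zero_le)
    fun i => (measure_mono fun x hx => ?_).trans (measure_union_le _ _)
  by_contra hcon
  simp only [mem_union, mem_ofPred_eq, not_or, not_le] at hcon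
  have hlt : edist (f i x + f' i x) (g x + g' x) < ε := calc
    _ ≤ edist (f i x) (g x) + edist (f' i x) (g' x) := edist_add_add_le _ _ _ _
    _ < ε / 2 + ε / 2 := ENNReal.add_lt_add hcon.1 hcon.2
    _ = ε := ENNReal.add_halves ε
  exact hlt.not_ge hx

/-- The sequential closure of a set of functions with respect to convergence in measure; for
`ℝ^d`-valued functions this is `clInProb`. -/
def closureInMeasure [EDist E] (μ : Measure α) (S : Set (α → E)) : Set (α → E) :=
  {g | ∃ f : ℕ → α → E, (∀ n, f n ∈ S) ∧ TendstoInMeasure μ f atTop g}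

theorem closureInMeasure_mono [EDist E] {S T : Set (α → E)} (hST : S ⊆ T) :
    closureInMeasure μ S ⊆ closureInMeasure μ T :=
  fun _ ⟨f, hf, hfg⟩ => ⟨f, fun n => hST (hf n), hfg⟩

theorem closureInMeasure_subset_of_eLpNorm_approx [NormedAddCommGroup E] {S T : Set (α → E)}
    (hp : p ≠ 0) (hS : ∀ f ∈ S, AEStronglyMeasurable f μ) (hT : ∀ h ∈ T, AEStronglyMeasurable h μ)
    (happrox : ∀ f ∈ S, ∀ ε : ℝ≥0∞, 0 < ε → ∃ h ∈ T, eLpNorm (h - f) p μ ≤ ε) :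
    closureInMeasure μ S ⊆ closureInMeasure μ T := by
  rintro g ⟨f, hf, hfg⟩
  choose h hhT hhf using fun n : ℕ =>
    happrox (f n) (hf n) (n : ℝ≥0∞)⁻¹ (ENNReal.inv_pos.mpr (ENNReal.natCast_ne_top n))
  have hnorm : Tendsto (fun n => eLpNorm (h n - f n - 0) p μ) atTop (𝓝 0) := by
    simp only [sub_zero]
    exact tendsto_of_tendsto_of_tendsto_of_le_of_le tendsto_const_nhds
      ENNReal.tendsto_inv_nat_nhds_zero (fun _ => zero_le) hhf
  have hdiff : TendstoInMeasure μ (fun n => h n - f n) atTop (0 : α → E) :=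
    tendstoInMeasure_of_tendsto_eLpNorm hp (fun n => (hT _ (hhT n)).sub (hS _ (hf n)))
      aestronglyMeasurable_zero hnorm
  exact ⟨h, hhT, by simpa only [sub_add_cancel, zero_add] using tendstoInMeasure_add hdiff hfg⟩

end ClosureInMeasure

section Truncation

variable {α E : Type*} {m : MeasurableSpace α} {μ : Measure α} {p : ℝ≥0∞} [NormedAddCommGroup E]
  {f : α → E}

/-- The truncation of `f` at level `r`: it is replaced by `0` wherever its norm exceeds `r`, rather
than rescaled to norm `r`, so that its values are values of `f` or `0`. -/
def normTruncation (f : α → E) (r : ℝ) : α → E :=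
  {x | ‖f x‖ ≤ r}.indicator f

theorem measurable_normTruncation [MeasurableSpace E] [OpensMeasurableSpace E] (hf : Measurable f)
    (r : ℝ) : Measurable (normTruncation f r) :=
  hf.indicator (measurableSet_le hf.norm measurable_const)

theorem integrable_normTruncation (hf : Integrable f μ) (r : ℝ) :
    Integrable (normTruncation f r) μ :=
  hf.indicator₀ (nullMeasurableSet_le hf.norm.aemeasurable aemeasurable_const)

theorem normTruncation_mem_inter_closedBall {s : Set E} {x : α} {r : ℝ} (h_zero : 0 ∈ s)
    (hfx : f x ∈ s) (hr : 0 ≤ r) : normTruncation f r x ∈ s ∩ Metric.closedBall 0 r := by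
  by_cases hx : ‖f x‖ ≤ r <;> simp [normTruncation, indicator, hx, h_zero, hfx, hr]

theorem normTruncation_sub_self (f : α → E) (r : ℝ) :
    normTruncation f r - f = -{x | r < ‖f x‖}.indicator f := by
  have hcompl : {x | r < ‖f x‖} = {x | ‖f x‖ ≤ r}ᶜ := by ext; simp
  rw [normTruncation, hcompl, indicator_compl, neg_sub]

theorem exists_eLpNorm_indicator_le_norm_le (hf : MemLp f p μ) {ε : ℝ≥0∞} (hε : 0 < ε) :
    ∃ M : ℝ, eLpNorm ({x | M ≤ ‖f x‖}.indicator f) p μ ≤ ε := by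
  obtain ⟨δ, hδ, hδε⟩ := ENNReal.lt_iff_exists_nnreal_btwn.mp hε
  obtain ⟨f', hf'm, hff'⟩ := hf.1
  obtain ⟨M, hM⟩ := ((memLp_congr_ae hff').mp hf).eLpNorm_indicator_norm_ge_le hf'm
    (NNReal.coe_pos.mpr (ENNReal.coe_pos.mp hδ))
  have hind : {x | M ≤ ‖f x‖}.indicator f =ᵐ[μ] {x | M ≤ ‖f' x‖}.indicator f' := by
    filter_upwards [hff'] with x hx
    simp only [indicator, mem_ofPred_eq, hx]
  refine ⟨M, ?_⟩
  rw [eLpNorm_congr_ae hind]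
  exact (hM.trans_eq ENNReal.ofReal_coe_nnreal).trans hδε.le

theorem tendsto_eLpNorm_normTruncation_sub (hf : MemLp f p μ) :
    Tendsto (fun r => eLpNorm (normTruncation f r - f) p μ) atTop (𝓝 0) := by
  refine ENNReal.tendsto_nhds_zero.mpr fun ε hε => ?_
  obtain ⟨M, hM⟩ := exists_eLpNorm_indicator_le_norm_le hf hε
  filter_upwards [eventually_ge_atTop M] with r hr
  rw [normTruncation_sub_self, eLpNorm_neg]
  refine (eLpNorm_mono fun x => ?_).trans hM
  exact norm_indicator_le_of_subset (fun y hy => hr.trans (le_of_lt hy)) f x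

end Truncation

theorem eLpNorm_condExp_sub_condExp_le {α E : Type*} {H F : MeasurableSpace α} {μ : Measure α}
    [NormedAddCommGroup E] [NormedSpace ℝ E] [CompleteSpace E] {p : ℝ≥0∞} {f g : α → E}
    (hf : Integrable f μ) (hg : Integrable g μ) (hp : 1 ≤ p) :
    eLpNorm (μ[f|H] - μ[g|H]) p μ ≤ eLpNorm (f - g) p μ := by
  rw [← eLpNorm_congr_ae (condExp_sub hf hg H)]
  exact eLpNorm_condExp_le_eLpNorm _ hp

section Selections

variable {Ω ι E : Type*} {H F : MeasurableSpace Ω} {μ : Measure Ω}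
  [NormedAddCommGroup E] [NormedSpace ℝ E] [MeasurableSpace E]

/-- The conditional expectations given `H` of the integrable selections of `X`, for `X` with values
in the subsets of a Banach space; in `ℝ^d` this is `condexpSet`. -/
def condExpSelections (μ : Measure Ω) (H : MeasurableSpace Ω) (X : Ω → Set E) : Set (Ω → E) :=
  {g | ∃ ξ : Ω → E, Measurable[F] ξ ∧ Integrable ξ μ ∧ (∀ᵐ ω ∂μ, ξ ω ∈ X ω) ∧ g = μ[ξ|H]}

theorem condExpSelections_mono {X Y : Ω → Set E} (hXY : ∀ᵐ ω ∂μ, X ω ⊆ Y ω) :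
    condExpSelections μ H X ⊆ condExpSelections μ H Y := by
  rintro g ⟨ξ, hξm, hξ, hξX, rfl⟩
  exact ⟨ξ, hξm, hξ, hξX.mp (hXY.mono fun _ hω h => hω h), rfl⟩

theorem condExp_normTruncation_mem_condExpSelections [OpensMeasurableSpace E] {X : Ω → Set E}
    (hX0 : ∀ᵐ ω ∂μ, 0 ∈ X ω) {ξ : Ω → E} (hξm : Measurable[F] ξ) (hξ : Integrable ξ μ)
    (hξX : ∀ᵐ ω ∂μ, ξ ω ∈ X ω) {r : ℝ} (hr : 0 ≤ r) :
    μ[normTruncation ξ r|H] ∈ condExpSelections μ H fun ω => X ω ∩ Metric.closedBall 0 r := by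
  refine ⟨_, measurable_normTruncation hξm r, integrable_normTruncation hξ r, ?_, rfl⟩
  filter_upwards [hX0, hξX] with ω h0 hω using normTruncation_mem_inter_closedBall h0 hω hr

variable [CompleteSpace E]

theorem aestronglyMeasurable_of_mem_condExpSelections {X : Ω → Set E} {g : Ω → E}
    (hg : g ∈ condExpSelections μ H X) : AEStronglyMeasurable g μ := by
  obtain ⟨ξ, -, -, -, rfl⟩ := hg
  exact integrable_condExp.aestronglyMeasurable

theorem exists_condExpSelections_inter_closedBall_eLpNorm_sub_le [OpensMeasurableSpace E]
    {X : Ω → Set E} (hX0 : ∀ᵐ ω ∂μ, 0 ∈ X ω) {l : Filter ι} [l.NeBot] {r : ι → ℝ}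
    (hr : Tendsto r l atTop) {g : Ω → E} (hg : g ∈ condExpSelections μ H X) {ε : ℝ≥0∞}
    (hε : 0 < ε) :
    ∃ i, ∃ h ∈ condExpSelections μ H fun ω => X ω ∩ Metric.closedBall 0 (r i),
      eLpNorm (h - g) 1 μ ≤ ε := by
  obtain ⟨ξ, hξm, hξ, hξX, rfl⟩ := hg
  have hlim := (tendsto_eLpNorm_normTruncation_sub (memLp_one_iff_integrable.mpr hξ)).comp hr
  obtain ⟨i, hi, hri⟩ :=
    ((ENNReal.tendsto_nhds_zero.mp hlim ε hε).and (hr.eventually_ge_atTop 0)).exists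
  exact ⟨i, _, condExp_normTruncation_mem_condExpSelections hX0 hξm hξ hξX hri,
    (eLpNorm_condExp_sub_condExp_le (integrable_normTruncation hξ _) hξ le_rfl).trans hi⟩

theorem stmt_15_general [OpensMeasurableSpace E] (hHF : H ≤ F) [SigmaFinite (μ.trim hHF)]
    {X : Ω → Set E} (hX0 : ∀ᵐ ω ∂μ, 0 ∈ X ω) {l : Filter ι} [l.NeBot] {r : ι → ℝ}
    (hr : Tendsto r l atTop) :
    closureInMeasure μ (condExpSelections μ H X) =
      closureInMeasure μ
        (⋃ i, condExpSelections μ H fun ω => X ω ∩ Metric.closedBall 0 (r i)) := by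
  have hsub : (⋃ i, condExpSelections μ H fun ω => X ω ∩ Metric.closedBall 0 (r i)) ⊆
      condExpSelections μ H X :=
    iUnion_subset fun i => condExpSelections_mono (ae_of_all _ fun _ => inter_subset_left)
  refine Subset.antisymm ?_ (closureInMeasure_mono hsub)
  refine closureInMeasure_subset_of_eLpNorm_approx one_ne_zero
    (fun _ => aestronglyMeasurable_of_mem_condExpSelections)
    (fun _ hh => aestronglyMeasurable_of_mem_condExpSelections (hsub hh)) fun g hg ε hε => ?_
  obtain ⟨i, h, hh, hle⟩ :=
    exists_condExpSelections_inter_closedBall_eLpNorm_sub_le hX0 hr hg hε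
  exact ⟨h, mem_iUnion_of_mem i hh, hle⟩

end Selections

/-- Lemma: for a random closed set `X` containing `0` a.s. and `Xⁿ = X ∩ {‖x‖ ≤ n}`,
the closure in probability of `{E(ξ|H) : ξ ∈ L¹(X,F)}` equals the closure in probability
of `⋃_{n ≥ 1} {E(ξ|H) : ξ ∈ L¹(Xⁿ,F)}` (equivalently, `E(X|H) = cl ⋃ₙ E(Xⁿ|H)` a.s.). -/
theorem stmt_15 {Ω : Type*} {d : ℕ} [F : MeasurableSpace Ω]
    (μ : Measure Ω) [IsProbabilityMeasure μ] [μ.IsComplete]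
    (H : MeasurableSpace Ω) (hHF : H ≤ F)
    (X : Ω → Set (Ed d)) (hX : GraphMeasurable F X)
    (hXcl : ∀ᵐ ω ∂μ, IsClosed (X ω))
    (hX0 : ∀ᵐ ω ∂μ, (0 : Ed d) ∈ X ω) :
    clInProb μ (condexpSet μ H X)
      = clInProb μ (⋃ n : ℕ,
          condexpSet μ H (fun ω => X ω ∩ Metric.closedBall 0 ((n : ℝ) + 1))) :=
  stmt_15_general hHF hX0
    (tendsto_atTop_add_const_right atTop (1 : ℝ) tendsto_natCast_atTop_atTop)
end
end
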